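/- arXiv:1709.00091 — 5 statements merged into one kernel-verified Lean document; each statement's English description precedes it below -/
import Mathlib

section
/- Let n ≥ 3 be a natural number, κ : Fin n → ℝ with κ i > 0 for every i, and set H = ∑_j κ j. Let S be a finite set of indices in Fin n with card S ≥ 2 such that κ i · H − (κ i)² − (n−1) = 0 for every i ∈ S. Then H² ≥ 4(n−1) and for every i ∈ S one has κ i = (H − √(H² − 4(n−1)))/2; in particular all the κ i with i ∈ S are equal. -/
/-!
Two roots of `x ^ 2 - H * x + c` are either equal or add up to `H`. Two of at least three positive
numbers with sum `H` add up to less than `H`, so those among them that are roots coincide; the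
common root is less than `H / 2`, hence is the smaller of the two roots.
-/

theorem add_lt_sum_of_two_lt_card {ι M : Type*} [AddCommMonoid M] [PartialOrder M]
    [IsOrderedCancelAddMonoid M] {s : Finset ι} {f : ι → M} {i j : ι} (hs : 2 < s.card)
    (hf : ∀ k ∈ s, 0 < f k) (hi : i ∈ s) (hj : j ∈ s) (hij : i ≠ j) :
    f i + f j < ∑ k ∈ s, f k := by
  classical
  have hcard : ({i, j} : Finset ι).card < s.card := by rwa [Finset.card_pair hij]
  obtain ⟨k, hk, hk_notMem⟩ := Finset.exists_mem_notMem_of_card_lt_card hcard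
  calc
    f i + f j = ∑ l ∈ {i, j}, f l := (Finset.sum_pair hij).symm
    _ < ∑ l ∈ s, f l :=
      Finset.sum_lt_sum_of_subset (Finset.insert_subset hi (Finset.singleton_subset_iff.mpr hj))
        hk hk_notMem (hf k hk) fun l hl _ => (hf l hl).le

theorem eq_or_add_eq_of_mul_sub_sq_eq {R : Type*} [CommRing R] [NoZeroDivisors R] {x y s : R}
    (h : x * s - x ^ 2 = y * s - y ^ 2) : x = y ∨ x + y = s := by
  have hprod : (x - y) * (x + y - s) = 0 := by linear_combination -h
  simpa only [mul_eq_zero, sub_eq_zero] using hprod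

theorem four_mul_le_sq_of_mul_sub_sq_sub_eq_zero {R : Type*} [CommRing R] [LinearOrder R]
    [IsStrictOrderedRing R] {x s c : R} (h : x * s - x ^ 2 - c = 0) : 4 * c ≤ s ^ 2 := by
  calc
    4 * c = 4 * x * (s - x) := by linear_combination -4 * h
    _ ≤ (x + (s - x)) ^ 2 := four_mul_le_sq_add x (s - x)
    _ = s ^ 2 := by rw [add_sub_cancel]

theorem eq_sub_sqrt_div_two_of_mul_sub_sq_sub_eq_zero {x s c : ℝ} (h : x * s - x ^ 2 - c = 0)
    (hx : 2 * x ≤ s) : x = (s - √(s ^ 2 - 4 * c)) / 2 := by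
  have hdiscrim : s ^ 2 - 4 * c = (s - 2 * x) ^ 2 := by linear_combination 4 * h
  rw [hdiscrim, Real.sqrt_sq (sub_nonneg.mpr hx)]
  ring

theorem ricci_null_directions_principal_general {ι : Type*} [Fintype ι]
    (hι : 2 < Fintype.card ι) {κ : ι → ℝ} (hκ : ∀ i, 0 < κ i) {H c : ℝ} (hH : H = ∑ j, κ j)
    {S : Finset ι} (hS : S.Nontrivial) (hroot : ∀ i ∈ S, κ i * H - κ i ^ 2 - c = 0) :
    4 * c ≤ H ^ 2 ∧ ∀ i ∈ S, κ i = (H - √(H ^ 2 - 4 * c)) / 2 := by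
  obtain ⟨i₀, hi₀⟩ := hS.nonempty
  refine ⟨four_mul_le_sq_of_mul_sub_sq_sub_eq_zero (hroot i₀ hi₀), fun i hi => ?_⟩
  obtain ⟨j, hj, hji⟩ := hS.exists_ne i
  have hlt : κ i + κ j < H :=
    hH ▸ add_lt_sum_of_two_lt_card hι (fun k _ => hκ k) (Finset.mem_univ i) (Finset.mem_univ j)
      hji.symm
  have heq : κ i = κ j :=
    (eq_or_add_eq_of_mul_sub_sq_eq (by linarith [hroot i hi, hroot j hj])).resolve_right hlt.ne
  exact eq_sub_sqrt_div_two_of_mul_sub_sq_sub_eq_zero (hroot i hi) (by linarith)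

/-- Algebraic core of Lemma 2.1: if `n ≥ 3`, all principal curvatures `κ i` are positive,
`H = ∑ κ j`, and `S` is a set of at least two indices on which
`κ i * H - (κ i)^2 - (n-1) = 0` (Ricci-null directions), then `H² ≥ 4(n-1)` and every
`κ i` with `i ∈ S` equals `(H - √(H² - 4(n-1)))/2`; in particular they are all equal. -/
theorem ricci_null_directions_principal (n : ℕ) (hn : 3 ≤ n) (κ : Fin n → ℝ)
    (hκ : ∀ i, 0 < κ i) (H : ℝ) (hH : H = ∑ j, κ j)
    (S : Finset (Fin n)) (hS : 2 ≤ S.card)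
    (hRic0 : ∀ i ∈ S, κ i * H - (κ i) ^ 2 - (n - 1 : ℝ) = 0) :
    H ^ 2 ≥ 4 * (n - 1 : ℝ) ∧
      ∀ i ∈ S, κ i = (H - Real.sqrt (H ^ 2 - 4 * (n - 1 : ℝ))) / 2 :=
  ricci_null_directions_principal_general (by rwa [Fintype.card_fin]) hκ hH
    (Finset.one_lt_card_iff_nontrivial.mp hS) hRic0
end

section
/- Let n ≥ 2 be a natural number, f > 0 a real number, v = (f₁,…,f_n) ∈ ℝⁿ a nonzero vector, and (f_{ij}) a symmetric n×n real matrix. With g_{ik} = f^{−2}(δ_{ik}+f_if_k), g^{jl} = f²(δ_{jl} − f_jf_l/(1+|Df|²)), II_{ij} = (δ_{ij}+f_if_j+f f_{ij})/(f²(1+|Df|²)^{1/2}), R_{ik} = −(n−1)g_{ik} + ∑_{j,l} g^{jl}(II_{ik}II_{jl} − II_{il}II_{jk}), and f̄^i = f f_i/(|Df|(1+|Df|²)^{1/2}), one has the identity ∑_{i,k} R_{ik} f̄^i f̄^k = −(n−1)|Df|²/(1+|Df|²) + (f/(|Df|²(1+|Df|²)²))·((n−2)H₁(f) + Δf·|Df|²(1+|Df|²)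 + f·H₁(f)·Δf − H₁(f)·|Df|² − f·H₂(f)). -/
/-!
In the Gauss term `∑ G j l * (B i k * B j l - B i l * B j k)` the bracket changes sign under
`k ↔ l`, so applied to `v` the term does not see the rank-one part of `G = 1 - c • v vᵀ`, and its
value on `(v, v)` is `tr B * B(v, v) - B²(v, v)`. The inverse metric of a graph is a multiple of
such a `G` with `v = Df`, and `II` is a multiple of `B = 1 + v vᵀ + f • D²f`. Since `v` is an
eigenvector of `1 + v vᵀ` for the eigenvalue `1 + |Df|²`, the three quantities `tr B`, `B(v, v)` and
`B²(v, v)` are polynomials in `n`, `f`, `|Df|²`, `Δf`, `H₁` and `H₂`.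
-/

open Matrix

section GaussContraction

variable {ι R : Type*} [Fintype ι]

theorem sum_sum_mul_mul_eq_dotProduct_mulVec [CommSemiring R] (M : Matrix ι ι R) (x : ι → R) :
    ∑ i, ∑ k, M i k * x i * x k = x ⬝ᵥ M *ᵥ x := by
  simp only [dotProduct, mulVec, Finset.mul_sum]
  exact Finset.sum_congr rfl fun i _ ↦ Finset.sum_congr rfl fun k _ ↦ by ring

theorem dotProduct_self_eq_sum_sq [Semiring R] (x : ι → R) : x ⬝ᵥ x = ∑ i, x i ^ 2 := by
  simp only [dotProduct, sq]

variable [CommRing R]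

/-- The term that the Gauss equation adds to the Ricci tensor of a hypersurface with inverse metric
`G` and second fundamental form `B`: the contraction with `G` of the curvature-like tensor
`B i k * B j l - B i l * B j k`. -/
def gaussContraction (G B : Matrix ι ι R) : Matrix ι ι R :=
  of fun i k ↦ ∑ j, ∑ l, G j l * (B i k * B j l - B i l * B j k)

theorem gaussContraction_eq (G B : Matrix ι ι R) :
    gaussContraction G B = (G * Bᵀ).trace • B - B * Gᵀ * B := by
  ext i k
  simp only [gaussContraction, of_apply, Matrix.sub_apply, Matrix.smul_apply, smul_eq_mul,
    trace, diag_apply, mul_apply, transpose_apply, Finset.sum_mul, ← Finset.sum_sub_distrib]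
  exact Finset.sum_congr rfl fun j _ ↦ Finset.sum_congr rfl fun l _ ↦ by ring

theorem gaussContraction_sub_left (G G' B : Matrix ι ι R) :
    gaussContraction (G - G') B = gaussContraction G B - gaussContraction G' B := by
  simp only [gaussContraction_eq, sub_mul, mul_sub, trace_sub, transpose_sub, sub_smul]
  abel

theorem gaussContraction_smul_smul (a b : R) (G B : Matrix ι ι R) :
    gaussContraction (a • G) (b • B) = (a * b ^ 2) • gaussContraction G B := by
  simp only [gaussContraction_eq, transpose_smul, smul_mul_smul_comm, trace_smul, smul_eq_mul,
    smul_sub, smul_smul]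
  congr 2 <;> ring

theorem gaussContraction_smul_left (a : R) (G B : Matrix ι ι R) :
    gaussContraction (a • G) B = a • gaussContraction G B := by
  simpa using gaussContraction_smul_smul a 1 G B

theorem gaussContraction_one_left [DecidableEq ι] (B : Matrix ι ι R) :
    gaussContraction 1 B = B.trace • B - B * B := by
  simp [gaussContraction_eq]

theorem gaussContraction_vecMulVec_self_mulVec (v : ι → R) (B : Matrix ι ι R) :
    gaussContraction (vecMulVec v v) B *ᵥ v = 0 := by
  have trace_eq : (vecMulVec v v * Bᵀ).trace = v ⬝ᵥ B *ᵥ v := by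
    rw [vecMulVec_mul, trace_vecMulVec, vecMul_transpose]
  rw [gaussContraction_eq, trace_eq]
  simp only [transpose_vecMulVec, mul_vecMulVec, vecMulVec_mul, sub_mulVec, smul_mulVec,
    vecMulVec_mulVec, op_smul_eq_smul, ← dotProduct_mulVec, sub_self]

theorem gaussContraction_sub_smul_vecMulVec_self_mulVec (G : Matrix ι ι R) (c : R) (v : ι → R)
    (B : Matrix ι ι R) :
    gaussContraction (G - c • vecMulVec v v) B *ᵥ v = gaussContraction G B *ᵥ v := by
  rw [gaussContraction_sub_left, gaussContraction_smul_left, sub_mulVec, smul_mulVec,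
    gaussContraction_vecMulVec_self_mulVec, smul_zero, sub_zero]

end GaussContraction

namespace VerticalGraph

variable {ι : Type*}

section Metric

variable [DecidableEq ι]

/-- The metric `g` induced on the graph of a function with value `f` and gradient `v` by the
half-space model of hyperbolic space. -/
noncomputable def metric (f : ℝ) (v : ι → ℝ) : Matrix ι ι ℝ :=
  (1 / f ^ 2) • (1 + vecMulVec v v)

theorem metric_apply (f : ℝ) (v : ι → ℝ) (i k : ι) :
    metric f v i k = 1 / f ^ 2 * ((if i = k then 1 else 0) + v i * v k) := by
  rw [metric, Matrix.smul_apply, Matrix.add_apply, one_apply, vecMulVec_apply, smul_eq_mul]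

end Metric

variable [Fintype ι]

/-- The components `f̄^i` of the unit gradient of the height function, with respect to the induced
metric, on the graph of a function with value `f` and gradient `v`; it is `0` when `v = 0`. -/
noncomputable def unitGradient (f : ℝ) (v : ι → ℝ) : ι → ℝ :=
  (f / (√(v ⬝ᵥ v) * √(1 + v ⬝ᵥ v))) • v

theorem unitGradient_apply (f : ℝ) (v : ι → ℝ) (i : ι) :
    unitGradient f v i = f * v i / (√(v ⬝ᵥ v) * √(1 + v ⬝ᵥ v)) := by
  rw [unitGradient, Pi.smul_apply, smul_eq_mul, div_mul_eq_mul_div]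

theorem unitGradient_dotProduct_mulVec (f : ℝ) (v : ι → ℝ) (M : Matrix ι ι ℝ) :
    unitGradient f v ⬝ᵥ M *ᵥ unitGradient f v =
      f ^ 2 / ((v ⬝ᵥ v) * (1 + v ⬝ᵥ v)) * (v ⬝ᵥ M *ᵥ v) := by
  have normSq_nonneg : 0 ≤ v ⬝ᵥ v := by simpa using dotProduct_self_star_nonneg v
  have scalar_sq : (f / (√(v ⬝ᵥ v) * √(1 + v ⬝ᵥ v))) ^ 2 =
      f ^ 2 / ((v ⬝ᵥ v) * (1 + v ⬝ᵥ v)) := by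
    rw [div_pow, mul_pow, Real.sq_sqrt normSq_nonneg, Real.sq_sqrt (by positivity)]
  rw [← scalar_sq, unitGradient, mulVec_smul, dotProduct_smul, smul_dotProduct, smul_eq_mul,
    smul_eq_mul]
  ring

variable [DecidableEq ι]

section SecondForm

variable {R : Type*} [CommRing R] (f : R) (v : ι → R) (F : Matrix ι ι R)

/-- The second fundamental form of the graph of a function with value `f`, gradient `v` and Hessian
`F`, up to the factor `f² √(1 + |v|²)` by which `secondFundamentalForm` divides. -/
def unnormalizedSecondForm : Matrix ι ι R := 1 + vecMulVec v v + f • F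

theorem trace_unnormalizedSecondForm :
    (unnormalizedSecondForm f v F).trace = Fintype.card ι + v ⬝ᵥ v + f * F.trace := by
  simp [unnormalizedSecondForm]

theorem unnormalizedSecondForm_mulVec_gradient :
    unnormalizedSecondForm f v F *ᵥ v = (1 + v ⬝ᵥ v) • v + f • F *ᵥ v := by
  simp [unnormalizedSecondForm, add_mulVec, smul_mulVec, vecMulVec_mulVec, add_smul]

theorem gradient_vecMul_unnormalizedSecondForm :
    v ᵥ* unnormalizedSecondForm f v F = (1 + v ⬝ᵥ v) • v + f • v ᵥ* F := by
  simp [unnormalizedSecondForm, vecMul_add, vecMul_smul, vecMul_vecMulVec, add_smul]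

theorem unnormalizedSecondForm_gradient_gradient :
    v ⬝ᵥ unnormalizedSecondForm f v F *ᵥ v = (1 + v ⬝ᵥ v) * (v ⬝ᵥ v) + f * (v ⬝ᵥ F *ᵥ v) := by
  simp [unnormalizedSecondForm_mulVec_gradient]

theorem unnormalizedSecondForm_sq_gradient_gradient :
    v ⬝ᵥ (unnormalizedSecondForm f v F * unnormalizedSecondForm f v F) *ᵥ v =
      (1 + v ⬝ᵥ v) ^ 2 * (v ⬝ᵥ v) + 2 * (1 + v ⬝ᵥ v) * f * (v ⬝ᵥ F *ᵥ v) +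
        f ^ 2 * (v ⬝ᵥ (F * F) *ᵥ v) := by
  have vecMul_dotProduct_mulVec (M : Matrix ι ι R) : v ⬝ᵥ (M * M) *ᵥ v = v ᵥ* M ⬝ᵥ M *ᵥ v := by
    rw [← mulVec_mulVec, dotProduct_mulVec]
  rw [vecMul_dotProduct_mulVec, vecMul_dotProduct_mulVec, unnormalizedSecondForm_mulVec_gradient,
    gradient_vecMul_unnormalizedSecondForm]
  simp only [add_dotProduct, dotProduct_add, smul_dotProduct, dotProduct_smul, smul_eq_mul,
    ← dotProduct_mulVec v F v]
  ring

theorem gaussContraction_unnormalizedSecondForm_gradient_gradient (c : R) :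
    v ⬝ᵥ gaussContraction (1 - c • vecMulVec v v) (unnormalizedSecondForm f v F) *ᵥ v =
      (Fintype.card ι - 1) * (1 + v ⬝ᵥ v) * (v ⬝ᵥ v) +
        f * ((Fintype.card ι - 2) * (v ⬝ᵥ F *ᵥ v) + F.trace * (v ⬝ᵥ v) * (1 + v ⬝ᵥ v) +
          f * (v ⬝ᵥ F *ᵥ v) * F.trace - (v ⬝ᵥ F *ᵥ v) * (v ⬝ᵥ v) - f * (v ⬝ᵥ (F * F) *ᵥ v)) := by
  rw [gaussContraction_sub_smul_vecMulVec_self_mulVec, gaussContraction_one_left, sub_mulVec,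
    smul_mulVec, dotProduct_sub, dotProduct_smul, smul_eq_mul, trace_unnormalizedSecondForm,
    unnormalizedSecondForm_gradient_gradient, unnormalizedSecondForm_sq_gradient_gradient]
  ring

end SecondForm

/-- The inverse of `metric f v`, with entries `g^{jl}`, for `f ≠ 0`. -/
noncomputable def invMetric (f : ℝ) (v : ι → ℝ) : Matrix ι ι ℝ :=
  f ^ 2 • (1 - (1 + v ⬝ᵥ v)⁻¹ • vecMulVec v v)

theorem invMetric_apply (f : ℝ) (v : ι → ℝ) (j l : ι) :
    invMetric f v j l = f ^ 2 * ((if j = l then 1 else 0) - v j * v l / (1 + v ⬝ᵥ v)) := by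
  rw [invMetric, Matrix.smul_apply, Matrix.sub_apply, Matrix.smul_apply, one_apply,
    vecMulVec_apply, smul_eq_mul, smul_eq_mul, div_eq_inv_mul]

/-- The second fundamental form `II` of the graph of a function with value `f`, gradient `v` and
Hessian `F`. -/
noncomputable def secondFundamentalForm (f : ℝ) (v : ι → ℝ) (F : Matrix ι ι ℝ) : Matrix ι ι ℝ :=
  (f ^ 2 * √(1 + v ⬝ᵥ v))⁻¹ • unnormalizedSecondForm f v F

theorem secondFundamentalForm_apply (f : ℝ) (v : ι → ℝ) (F : Matrix ι ι ℝ) (i j : ι) :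
    secondFundamentalForm f v F i j =
      ((if i = j then 1 else 0) + v i * v j + f * F i j) / (f ^ 2 * √(1 + v ⬝ᵥ v)) := by
  rw [secondFundamentalForm, unnormalizedSecondForm, Matrix.smul_apply, Matrix.add_apply,
    Matrix.add_apply, Matrix.smul_apply, one_apply, vecMulVec_apply, smul_eq_mul, smul_eq_mul,
    div_eq_inv_mul]

/-- The Ricci tensor of the graph, as given by the Gauss equation in hyperbolic space of dimension
`Fintype.card ι + 1`. -/
noncomputable def ricci (f : ℝ) (v : ι → ℝ) (F : Matrix ι ι ℝ) : Matrix ι ι ℝ :=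
  -(Fintype.card ι - 1 : ℝ) • metric f v +
    gaussContraction (invMetric f v) (secondFundamentalForm f v F)

theorem ricci_apply (f : ℝ) (v : ι → ℝ) (F : Matrix ι ι ℝ) (i k : ι) :
    ricci f v F i k = -(Fintype.card ι - 1 : ℝ) * metric f v i k +
      ∑ j, ∑ l, invMetric f v j l *
        (secondFundamentalForm f v F i k * secondFundamentalForm f v F j l -
          secondFundamentalForm f v F i l * secondFundamentalForm f v F j k) :=
  rfl

theorem metric_unitGradient_unitGradient {f : ℝ} (hf : f ≠ 0) {v : ι → ℝ} (hv : v ≠ 0) :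
    unitGradient f v ⬝ᵥ metric f v *ᵥ unitGradient f v = 1 := by
  have normSq_pos : 0 < v ⬝ᵥ v := by simpa using dotProduct_self_star_pos_iff.2 hv
  have metric_gradient_gradient :
      v ⬝ᵥ metric f v *ᵥ v = (v ⬝ᵥ v) * (1 + v ⬝ᵥ v) / f ^ 2 := by
    simp only [metric, smul_mulVec, add_mulVec, one_mulVec, vecMulVec_mulVec, op_smul_eq_smul,
      dotProduct_add, dotProduct_smul, smul_eq_mul]
    ring
  rw [unitGradient_dotProduct_mulVec, metric_gradient_gradient]
  field_simp

theorem gaussContraction_invMetric_secondFundamentalForm {f : ℝ} (hf : f ≠ 0) (v : ι → ℝ)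
    (F : Matrix ι ι ℝ) :
    gaussContraction (invMetric f v) (secondFundamentalForm f v F) =
      (f ^ 2 * (1 + v ⬝ᵥ v))⁻¹ •
        gaussContraction (1 - (1 + v ⬝ᵥ v)⁻¹ • vecMulVec v v) (unnormalizedSecondForm f v F) := by
  have normSq_nonneg : 0 ≤ v ⬝ᵥ v := by simpa using dotProduct_self_star_nonneg v
  rw [invMetric, secondFundamentalForm, gaussContraction_smul_smul, inv_pow, mul_pow,
    Real.sq_sqrt (by positivity)]
  congr 1
  field_simp

end VerticalGraph

open VerticalGraph

theorem ricci_normalized_gradient_identity_general {ι : Type*} [Fintype ι] [DecidableEq ι]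
    {f : ℝ} (hf : f ≠ 0) {v : ι → ℝ} (hv : v ≠ 0) (F : Matrix ι ι ℝ) :
    unitGradient f v ⬝ᵥ ricci f v F *ᵥ unitGradient f v =
      -(Fintype.card ι - 1 : ℝ) * (v ⬝ᵥ v) / (1 + v ⬝ᵥ v) +
        (f / ((v ⬝ᵥ v) * (1 + v ⬝ᵥ v) ^ 2)) *
          ((Fintype.card ι - 2 : ℝ) * (v ⬝ᵥ F *ᵥ v) + F.trace * (v ⬝ᵥ v) * (1 + v ⬝ᵥ v) +
            f * (v ⬝ᵥ F *ᵥ v) * F.trace - (v ⬝ᵥ F *ᵥ v) * (v ⬝ᵥ v) -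
              f * (v ⬝ᵥ (F * F) *ᵥ v)) := by
  have normSq_pos : 0 < v ⬝ᵥ v := by simpa using dotProduct_self_star_pos_iff.2 hv
  rw [ricci, add_mulVec, dotProduct_add, smul_mulVec, dotProduct_smul,
    metric_unitGradient_unitGradient hf hv, unitGradient_dotProduct_mulVec,
    gaussContraction_invMetric_secondFundamentalForm hf, smul_mulVec, dotProduct_smul,
    gaussContraction_unnormalizedSecondForm_gradient_gradient, smul_eq_mul, smul_eq_mul]
  field_simp
  ring

/-- Identity (3.6): the Ricci curvature of a vertical graph in hyperbolic space, in the
direction of the normalized gradient of the height function `f`, expressed in terms of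
`|Df|² = ∑ fᵢ²`, `Δf = ∑ fᵢᵢ`, `H₁(f) = ∑ fᵢⱼfᵢfⱼ` and `H₂(f) = ∑ fᵢₖfₖⱼfᵢfⱼ`. -/
theorem ricci_normalized_gradient_identity (n : ℕ) (hn : 2 ≤ n)
    (f : ℝ) (hf : 0 < f) (v : Fin n → ℝ) (hv : v ≠ 0)
    (fd : Fin n → Fin n → ℝ) (hfd : ∀ i j, fd i j = fd j i)
    (Df2 Δf H1 H2 : ℝ)
    (hDf2 : Df2 = ∑ i, (v i) ^ 2)
    (hΔf : Δf = ∑ i, fd i i)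
    (hH1 : H1 = ∑ i, ∑ j, fd i j * v i * v j)
    (hH2 : H2 = ∑ i, ∑ j, ∑ k, fd i k * fd k j * v i * v j)
    (g gInv II R : Fin n → Fin n → ℝ) (fbar : Fin n → ℝ)
    (hg : ∀ i k, g i k = (1 / f ^ 2) * ((if i = k then (1:ℝ) else 0) + v i * v k))
    (hgInv : ∀ j l, gInv j l =
      f ^ 2 * ((if j = l then (1:ℝ) else 0) - v j * v l / (1 + Df2)))
    (hII : ∀ i j, II i j =
      ((if i = j then (1:ℝ) else 0) + v i * v j + f * fd i j) / (f ^ 2 * Real.sqrt (1 + Df2)))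
    (hR : ∀ i k, R i k = -(n - 1 : ℝ) * g i k +
      ∑ j, ∑ l, gInv j l * (II i k * II j l - II i l * II j k))
    (hfbar : ∀ i, fbar i = f * v i / (Real.sqrt Df2 * Real.sqrt (1 + Df2))) :
    ∑ i, ∑ k, R i k * fbar i * fbar k =
      -(n - 1 : ℝ) * Df2 / (1 + Df2) +
        (f / (Df2 * (1 + Df2) ^ 2)) *
          ((n - 2 : ℝ) * H1 + Δf * Df2 * (1 + Df2) + f * H1 * Δf - H1 * Df2 - f * H2) := by
  subst hDf2 hΔf hH1 hH2
  simpa only [hR, hg, hgInv, hII, hfbar, ricci_apply, metric_apply, invMetric_apply,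
    secondFundamentalForm_apply, unitGradient_apply, dotProduct_self_eq_sum_sq,
    ← sum_sum_mul_mul_eq_dotProduct_mulVec, trace, diag_apply, mul_apply, of_apply, Finset.sum_mul,
    Fintype.card_fin] using ricci_normalized_gradient_identity_general hf.ne' hv (of fd)
end

section
/- Let n ≥ 2 be a natural number, f > 0 and f₁ real numbers, and A, B real numbers. Set X = (1+f₁²)/f + A and Y = B + (n−1)/f, and let a = f·(1+f₁²)^{−3/2}·X and b = f·(1+f₁²)^{−1/2}·Y. If a·b ≥ n−1 and a + b ≥ n, then a > 0, b > 0, and √((n−1)·X)·√Y ≥ (n−1)·(1+f₁²)/f. -/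
/-!
The half-integer powers of `W = 1 + f₁²` in `a` and `b` combine to `W⁻²`, so `c ≤ a * b` with
`c = n - 1` says `c * (W / f)² ≤ X * Y`; multiplying by `c` and taking square roots gives the bound.
Both `a` and `b` are positive: `0 < a * b` gives them the same sign, which `0 ≤ a + b` fixes.
-/

theorem pos_and_pos_of_mul_pos_of_add_nonneg {R : Type*} [Ring R] [LinearOrder R]
    [IsStrictOrderedRing R] {a b : R} (hmul : 0 < a * b) (hadd : 0 ≤ a + b) : 0 < a ∧ 0 < b :=
  (mul_pos_iff.mp hmul).resolve_right fun ⟨ha, hb⟩ ↦ (add_neg ha hb).not_ge hadd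

theorem mul_le_sqrt_mul_mul_sqrt {c t x y : ℝ} (hc : 0 ≤ c) (hx : 0 ≤ x)
    (h : c * t ^ 2 ≤ x * y) : c * t ≤ √(c * x) * √y := by
  rw [← Real.sqrt_mul (mul_nonneg hc hx)]
  apply Real.le_sqrt_of_sq_le
  calc (c * t) ^ 2 = c * (c * t ^ 2) := by ring
    _ ≤ c * (x * y) := mul_le_mul_of_nonneg_left h hc
    _ = c * x * y := by ring

theorem rpow_neg_three_halves_mul_rpow_neg_half {W : ℝ} (hW : 0 < W) :
    W ^ (-(3 : ℝ) / 2) * W ^ (-(1 : ℝ) / 2) = (W ^ 2)⁻¹ := by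
  rw [← Real.rpow_add hW, ← Real.rpow_natCast, ← Real.rpow_neg hW.le]
  norm_num

theorem key_inequality_general {c f W X Y a b : ℝ} (hc : 0 < c) (hf : 0 < f) (hW : 0 < W)
    (ha : a = f * W ^ (-(3 : ℝ) / 2) * X) (hb : b = f * W ^ (-(1 : ℝ) / 2) * Y)
    (hab : c ≤ a * b) (hsum : 0 ≤ a + b) :
    0 < a ∧ 0 < b ∧ c * W / f ≤ √(c * X) * √Y := by
  obtain ⟨a_pos, b_pos⟩ := pos_and_pos_of_mul_pos_of_add_nonneg (hc.trans_le hab) hsum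
  have X_pos : 0 < X := pos_of_mul_pos_right (ha ▸ a_pos) (by positivity)
  have XY_eq : a * b * (W / f) ^ 2 = X * Y := calc
    a * b * (W / f) ^ 2
      = f ^ 2 * (W ^ (-(3 : ℝ) / 2) * W ^ (-(1 : ℝ) / 2)) * (X * Y) * (W / f) ^ 2 := by
        rw [ha, hb]; ring
    _ = X * Y := by rw [rpow_neg_three_halves_mul_rpow_neg_half hW]; field_simp
  have XY_ge : c * (W / f) ^ 2 ≤ X * Y :=
    XY_eq ▸ mul_le_mul_of_nonneg_right hab (sq_nonneg _)
  refine ⟨a_pos, b_pos, ?_⟩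
  rw [mul_div_assoc]
  exact mul_le_sqrt_mul_mul_sqrt hc.le X_pos.le XY_ge

/-- Inequality (3.9): with `X = (1+f₁²)/f + A`, `Y = B + (n-1)/f`,
`a = f(1+f₁²)^{-3/2}X` and `b = f(1+f₁²)^{-1/2}Y`, if `ab ≥ n-1` (nonnegative Ricci,
i.e. (3.8)) and `a+b ≥ n` (mean curvature at least `n`), then both factors are positive
and `√((n-1)X)·√Y ≥ (n-1)(1+f₁²)/f`. -/
theorem key_inequality (n : ℕ) (hn : 2 ≤ n) (f f₁ A B : ℝ) (hf : 0 < f)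
    (X Y a b : ℝ)
    (hX : X = (1 + f₁ ^ 2) / f + A)
    (hY : Y = B + (n - 1 : ℝ) / f)
    (ha : a = f * (1 + f₁ ^ 2) ^ (-(3 : ℝ) / 2) * X)
    (hb : b = f * (1 + f₁ ^ 2) ^ (-(1 : ℝ) / 2) * Y)
    (hab : a * b ≥ (n - 1 : ℝ)) (hsum : a + b ≥ n) :
    0 < a ∧ 0 < b ∧
      Real.sqrt ((n - 1 : ℝ) * X) * Real.sqrt Y ≥ (n - 1 : ℝ) * (1 + f₁ ^ 2) / f := by
  have one_lt_n : (1 : ℝ) < n := by exact_mod_cast hn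
  exact key_inequality_general (by linarith) hf (by positivity) ha hb hab (by linarith)
end

section
/- Let n ≥ 2 be a natural number, f > 0 and f₁ real numbers, and A, B real numbers. Suppose X = (1+f₁²)/f + A > 0, Y = B + (n−1)/f > 0, and X·Y ≥ (n−1)·(1+f₁²)²/f². Then (n−1)·(A/f − f₁²/f²) + B/f ≥ 0. -/
/-!
Put `m = n - 1` and `w = (1 + f₁²) / f`, so that `X = w + A`, `Y = B + m / f` and the curvature
hypothesis reads `m w² ≤ X Y`. Multiplied by `f`, the quantity to be bounded below is
`m X + Y - 2 m w`, and the inequality between arithmetic and geometric means for `m X` and `Y`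
gives `m X + Y ≥ 2 √(m X Y) ≥ 2 m w`.
-/

theorem two_mul_mul_le_mul_add_of_mul_sq_le_mul {R : Type*} [CommSemiring R] [LinearOrder R]
    [IsStrictOrderedRing R] [ExistsAddOfLE R] {m x y w : R} (hm : 0 ≤ m) (hx : 0 ≤ x)
    (hy : 0 ≤ y) (h : m * w ^ 2 ≤ x * y) : 2 * (m * w) ≤ m * x + y := by
  refine two_mul_le_add_of_sq_le_mul (mul_nonneg hm hx) hy ?_
  calc (m * w) ^ 2 = m * (m * w ^ 2) := by ring
    _ ≤ m * (x * y) := by gcongr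
    _ = m * x * y := (mul_assoc m x y).symm

theorem young_step_n_subharmonic_general {K : Type*} [Field K] [LinearOrder K]
    [IsStrictOrderedRing K] {m f f₁ A B : K} (hm : 0 ≤ m) (hf : 0 < f)
    (hX : 0 ≤ (1 + f₁ ^ 2) / f + A) (hY : 0 ≤ B + m / f)
    (hXY : m * (1 + f₁ ^ 2) ^ 2 / f ^ 2 ≤ ((1 + f₁ ^ 2) / f + A) * (B + m / f)) :
    0 ≤ m * (A / f - f₁ ^ 2 / f ^ 2) + B / f := by
  rw [mul_div_assoc, ← div_pow] at hXY
  have young : 2 * (m * ((1 + f₁ ^ 2) / f)) ≤ m * ((1 + f₁ ^ 2) / f + A) + (B + m / f) :=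
    two_mul_mul_le_mul_add_of_mul_sq_le_mul hm hX hY hXY
  calc 0 ≤ (m * ((1 + f₁ ^ 2) / f + A) + (B + m / f) - 2 * (m * ((1 + f₁ ^ 2) / f))) / f :=
        div_nonneg (sub_nonneg.mpr young) hf.le
    _ = m * (A / f - f₁ ^ 2 / f ^ 2) + B / f := by field_simp; ring

/-- The Young's-inequality step in Theorem 3.3: if `X = (1+f₁²)/f + A > 0`,
`Y = B + (n-1)/f > 0` and `XY ≥ (n-1)(1+f₁²)²/f²`, then
`(n-1)(A/f - f₁²/f²) + B/f ≥ 0`, i.e. `log f` is pointwise `n`-subharmonic in adapted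
coordinates. -/
theorem young_step_n_subharmonic (n : ℕ) (hn : 2 ≤ n) (f f₁ A B : ℝ) (hf : 0 < f)
    (X Y : ℝ)
    (hX : X = (1 + f₁ ^ 2) / f + A) (hXpos : 0 < X)
    (hY : Y = B + (n - 1 : ℝ) / f) (hYpos : 0 < Y)
    (hXY : X * Y ≥ (n - 1 : ℝ) * (1 + f₁ ^ 2) ^ 2 / f ^ 2) :
    (n - 1 : ℝ) * (A / f - f₁ ^ 2 / f ^ 2) + B / f ≥ 0 := by
  subst hX hY
  have one_le_n : (1 : ℝ) ≤ n := mod_cast one_le_two.trans hn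
  exact young_step_n_subharmonic_general (sub_nonneg.mpr one_le_n) hf hXpos.le hYpos.le hXY
end

section
/- Let n ≥ 2 be a natural number, U an open subset of Euclidean space ℝⁿ, and f : U → ℝ a positive C² function. At each point x ∈ U with ∇f(x) ≠ 0 write H₁ = ⟨(Hess f)(x)(∇f(x)), ∇f(x)⟩, H₂ = ‖(Hess f)(x)(∇f(x))‖², Δf = trace of (Hess f)(x), and |Df|² = ‖∇f(x)‖². Suppose that at every such x: (i) −(n−1)|Df|²/(1+|Df|²) + (f/(|Df|²(1+|Df|²)²))·((n−2)H₁ + Δf·|Df|²(1+|Df|²) + f·H₁·Δf − H₁·|Df|² − f·H₂) ≥ 0, and (ii) (1+|Df|²)^{−1/2}·(n + f·Δf − f·H₁/(1+|Df|²)) ≥ n. Then at every x ∈ U with ∇f(x) ≠ 0, the function h = log f satisfies Δh(x) + (n−2)·⟨(Hess h)(x)(∇h(x)), ∇h(x)⟩/‖∇h(x)‖² ≥ 0; that is, log f is pointwise n-subharmonic wherever its gradient does not vanish. -/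
open scoped RealInnerProductSpace

/-!
Write `s = √(1 + |Df|²)`, let `κ` be the curvature of the graph in the direction of the gradient,
and let `μ` be the average of its second fundamental form over the `n - 1` directions tangent to
the level set of `f`. Then the mean curvature is `κ + (n - 1) μ`, the Gauss equation and
Cauchy–Schwarz bound the Ricci curvature in the gradient direction by `(n - 1) (κ μ - 1)`, and
`f² |D log f|^(2 - n) Δₙ (log f) = (n - 1) (s³ κ + s μ - 2 s²)`. Nonnegative Ricci curvature gives
`κ μ ≥ 1`, the sign of the mean curvature makes `κ` and `μ` positive, and AM–GM applied to `s² κ`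
and `μ` concludes.
-/

open Module Topology
open scoped Gradient

variable {E : Type*} [NormedAddCommGroup E] [InnerProductSpace ℝ E] [CompleteSpace E]
  {f : E → ℝ} {x : E}

namespace VerticalGraph

noncomputable section

/-- The Hessian of `f` at `x`, as the endomorphism differentiating the gradient. -/
def hessian (f : E → ℝ) (x : E) : E →L[ℝ] E :=
  fderiv ℝ (∇ f) x

/-- The Euclidean Laplacian `Δf`, as the trace of the Hessian endomorphism. -/
def hessianTrace (f : E → ℝ) (x : E) : ℝ :=
  LinearMap.trace ℝ E (hessian f x : E →ₗ[ℝ] E)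

/-- The second derivative of `f` in the direction of the unit vector `Df / |Df|`; it is `0` where
the gradient vanishes. -/
def radialHessian (f : E → ℝ) (x : E) : ℝ :=
  ⟪hessian f x (∇ f x), ∇ f x⟫ / ‖∇ f x‖ ^ 2

/-- The normalized `p`-Laplacian `|Dh|^(2 - p) Div(|Dh|^(p - 2) Dh)`, expanded so that it makes
sense for twice differentiable `h`; it has the sign of the `p`-Laplacian wherever `Dh ≠ 0`. -/
def normalizedPLaplacian (p : ℝ) (h : E → ℝ) (x : E) : ℝ :=
  hessianTrace h x + (p - 2) * ⟪hessian h x (∇ h x), ∇ h x⟫ / ‖∇ h x‖ ^ 2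

/-- The Ricci curvature, in the direction of the normalized gradient of `f`, of the graph of `f`
in the upper half-space model of hyperbolic space; this is identity (3.6) of the paper, and it is
meaningful only where `f > 0` and `Df ≠ 0`. -/
def gradientRicci (f : E → ℝ) (x : E) : ℝ :=
  -(finrank ℝ E - 1 : ℝ) * ‖∇ f x‖ ^ 2 / (1 + ‖∇ f x‖ ^ 2) +
    (f x / (‖∇ f x‖ ^ 2 * (1 + ‖∇ f x‖ ^ 2) ^ 2)) *
      ((finrank ℝ E - 2 : ℝ) * ⟪hessian f x (∇ f x), ∇ f x⟫ +
        hessianTrace f x * ‖∇ f x‖ ^ 2 * (1 + ‖∇ f x‖ ^ 2) +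
        f x * ⟪hessian f x (∇ f x), ∇ f x⟫ * hessianTrace f x -
        ⟪hessian f x (∇ f x), ∇ f x⟫ * ‖∇ f x‖ ^ 2 -
        f x * ‖hessian f x (∇ f x)‖ ^ 2)

/-- The mean curvature of the graph of `f` in the upper half-space model of hyperbolic space,
normalized as the trace of the second fundamental form, so that a horosphere `f = const` has mean
curvature `dim E`. -/
def meanCurvature (f : E → ℝ) (x : E) : ℝ :=
  (1 / √(1 + ‖∇ f x‖ ^ 2)) *
    (finrank ℝ E + f x * hessianTrace f x -
      f x * ⟪hessian f x (∇ f x), ∇ f x⟫ / (1 + ‖∇ f x‖ ^ 2))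

/-- The area density `√(1 + |Df|²)` of the Euclidean graph of `f`. -/
def areaDensity (f : E → ℝ) (x : E) : ℝ :=
  √(1 + ‖∇ f x‖ ^ 2)

/-- The second fundamental form of the hyperbolic graph of `f` on the unit tangent vector lying
over the gradient direction. -/
def gradientCurvature (f : E → ℝ) (x : E) : ℝ :=
  (f x * radialHessian f x + areaDensity f x ^ 2) / areaDensity f x ^ 3

/-- The average of the second fundamental form of the hyperbolic graph of `f` over the
`dim E - 1` directions tangent to the level set of `f`. -/
def levelCurvature (f : E → ℝ) (x : E) : ℝ :=
  (f x * (hessianTrace f x - radialHessian f x) / (finrank ℝ E - 1) + 1) / areaDensity f x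

end

section Logarithm

lemma gradient_log (hf : DifferentiableAt ℝ f x) (hfx : f x ≠ 0) :
    ∇ (fun y => Real.log (f y)) x = (f x)⁻¹ • ∇ f x := by
  simp only [gradient, fderiv.log hf hfx, map_smul]

lemma differentiableAt_gradient (hf : ContDiffAt ℝ 2 f x) : DifferentiableAt ℝ (∇ f) x :=
  have hfderiv : DifferentiableAt ℝ (fderiv ℝ f) x :=
    (hf.fderiv_right (m := 1) (by norm_num)).differentiableAt one_ne_zero
  (InnerProductSpace.toDual ℝ E).symm.toContinuousLinearEquiv.differentiableAt.comp x hfderiv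

lemma hessian_log (hf : ContDiffAt ℝ 2 f x) (hfx : f x ≠ 0) :
    hessian (fun y => Real.log (f y)) x =
      (f x)⁻¹ • hessian f x - (f x ^ 2)⁻¹ • InnerProductSpace.rankOne ℝ (∇ f x) (∇ f x) := by
  have gradient_log_eventuallyEq :
      ∇ (fun y => Real.log (f y)) =ᶠ[𝓝 x] (fun y => (f y)⁻¹) • ∇ f := by
    filter_upwards [hf.eventually (by simp), hf.continuousAt.eventually_ne hfx] with y hy hfy
    exact gradient_log (hy.differentiableAt two_ne_zero) hfy
  have hasFDerivAt_inv_f : HasFDerivAt (fun y => (f y)⁻¹) (-(f x ^ 2)⁻¹ • fderiv ℝ f x) x :=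
    (hasDerivAt_inv hfx).comp_hasFDerivAt x (hf.differentiableAt two_ne_zero).hasFDerivAt
  rw [hessian, gradient_log_eventuallyEq.fderiv_eq,
    (hasFDerivAt_inv_f.smul (differentiableAt_gradient hf).hasFDerivAt).fderiv]
  ext1 v
  simp [hessian, inner_gradient_left, smul_smul, sub_eq_add_neg]

lemma hessianTrace_log [FiniteDimensional ℝ E] (hf : ContDiffAt ℝ 2 f x) (hfx : f x ≠ 0) :
    hessianTrace (fun y => Real.log (f y)) x =
      (f x)⁻¹ * hessianTrace f x - (f x ^ 2)⁻¹ * ‖∇ f x‖ ^ 2 := by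
  simp [hessianTrace, hessian_log hf hfx, InnerProductSpace.trace_rankOne]

lemma radialHessian_log (hf : ContDiffAt ℝ 2 f x) (hfx : f x ≠ 0) :
    radialHessian (fun y => Real.log (f y)) x =
      (f x)⁻¹ * radialHessian f x - (f x ^ 2)⁻¹ * ‖∇ f x‖ ^ 2 := by
  rcases eq_or_ne (∇ f x) 0 with hgrad | hgrad
  · simp [radialHessian, gradient_log (hf.differentiableAt two_ne_zero) hfx, hgrad]
  · have norm_gradient_ne_zero : ‖∇ f x‖ ≠ 0 := norm_ne_zero_iff.mpr hgrad
    simp only [radialHessian, hessian_log hf hfx,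
      gradient_log (hf.differentiableAt two_ne_zero) hfx, sub_apply, smul_apply,
      InnerProductSpace.rankOne_apply, map_smul, inner_sub_left,
      real_inner_smul_left, real_inner_smul_right, real_inner_self_eq_norm_sq, norm_smul,
      norm_inv, Real.norm_eq_abs, mul_pow, inv_pow, sq_abs]
    field_simp

end Logarithm

section Curvature

lemma inner_hessian_gradient (f : E → ℝ) (x : E) :
    ⟪hessian f x (∇ f x), ∇ f x⟫ = radialHessian f x * ‖∇ f x‖ ^ 2 := by
  rcases eq_or_ne (∇ f x) 0 with hgrad | hgrad
  · simp [hgrad]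
  · exact (div_mul_cancel₀ _ (pow_ne_zero 2 (norm_ne_zero_iff.mpr hgrad))).symm

lemma radialHessian_sq_le (f : E → ℝ) (x : E) :
    radialHessian f x ^ 2 ≤ ‖hessian f x (∇ f x)‖ ^ 2 / ‖∇ f x‖ ^ 2 := by
  rcases eq_or_ne (∇ f x) 0 with hgrad | hgrad
  · simp [radialHessian, hgrad]
  · have norm_gradient_pos : 0 < ‖∇ f x‖ := norm_pos_iff.mpr hgrad
    have cauchy_schwarz :
        ⟪hessian f x (∇ f x), ∇ f x⟫ ^ 2 ≤ (‖hessian f x (∇ f x)‖ * ‖∇ f x‖) ^ 2 :=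
      sq_le_sq' (neg_le_of_abs_le (abs_real_inner_le_norm _ _)) (real_inner_le_norm _ _)
    rw [inner_hessian_gradient] at cauchy_schwarz
    rw [le_div_iff₀ (by positivity)]
    exact le_of_mul_le_mul_right (by linarith) (pow_pos norm_gradient_pos 2)

lemma areaDensity_pos (f : E → ℝ) (x : E) : 0 < areaDensity f x :=
  Real.sqrt_pos.mpr (by positivity)

lemma areaDensity_sq (f : E → ℝ) (x : E) : areaDensity f x ^ 2 = 1 + ‖∇ f x‖ ^ 2 :=
  Real.sq_sqrt (by positivity)

lemma norm_gradient_sq (f : E → ℝ) (x : E) : ‖∇ f x‖ ^ 2 = areaDensity f x ^ 2 - 1 :=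
  eq_sub_of_add_eq' (areaDensity_sq f x).symm

lemma meanCurvature_eq (hdim : finrank ℝ E ≠ 1) :
    meanCurvature f x = gradientCurvature f x + (finrank ℝ E - 1) * levelCurvature f x := by
  have finrank_sub_one_ne_zero : (finrank ℝ E - 1 : ℝ) ≠ 0 :=
    sub_ne_zero.mpr (Nat.cast_ne_one.mpr hdim)
  have areaDensity_ne_zero := (areaDensity_pos f x).ne'
  rw [meanCurvature, ← areaDensity, inner_hessian_gradient, ← areaDensity_sq, norm_gradient_sq,
    gradientCurvature, levelCurvature]
  field_simp
  ring

lemma gradientRicci_eq (hdim : finrank ℝ E ≠ 1) (hgrad : ∇ f x ≠ 0) :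
    gradientRicci f x =
      (finrank ℝ E - 1) * (gradientCurvature f x * levelCurvature f x - 1) -
        f x ^ 2 * (‖hessian f x (∇ f x)‖ ^ 2 / ‖∇ f x‖ ^ 2 - radialHessian f x ^ 2) /
          areaDensity f x ^ 4 := by
  have finrank_sub_one_ne_zero : (finrank ℝ E - 1 : ℝ) ≠ 0 :=
    sub_ne_zero.mpr (Nat.cast_ne_one.mpr hdim)
  have norm_gradient_ne_zero : ‖∇ f x‖ ≠ 0 := norm_ne_zero_iff.mpr hgrad
  have areaDensity_pos := areaDensity_pos f x
  have curvature_mul : gradientCurvature f x * levelCurvature f x =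
      (f x * radialHessian f x + (1 + ‖∇ f x‖ ^ 2)) *
        (f x * (hessianTrace f x - radialHessian f x) / (finrank ℝ E - 1) + 1) /
          (1 + ‖∇ f x‖ ^ 2) ^ 2 := by
    rw [gradientCurvature, levelCurvature, ← areaDensity_sq]
    field_simp
  have areaDensity_pow_four : areaDensity f x ^ 4 = (1 + ‖∇ f x‖ ^ 2) ^ 2 := by
    rw [← areaDensity_sq]; ring
  have one_add_ne_zero : 1 + ‖∇ f x‖ ^ 2 ≠ 0 := by positivity
  rw [curvature_mul, areaDensity_pow_four, gradientRicci, inner_hessian_gradient]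
  field_simp
  ring

lemma gradientRicci_le (hdim : finrank ℝ E ≠ 1) (hgrad : ∇ f x ≠ 0) :
    gradientRicci f x ≤
      (finrank ℝ E - 1) * (gradientCurvature f x * levelCurvature f x - 1) := by
  rw [gradientRicci_eq hdim hgrad]
  have areaDensity_pos := areaDensity_pos f x
  have cauchy_schwarz_defect := sub_nonneg.mpr (radialHessian_sq_le f x)
  exact sub_le_self _ (by positivity)

lemma sq_mul_normalizedPLaplacian_log [FiniteDimensional ℝ E] (hdim : finrank ℝ E ≠ 1)
    (hf : ContDiffAt ℝ 2 f x) (hfx : f x ≠ 0) :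
    f x ^ 2 * normalizedPLaplacian (finrank ℝ E) (fun y => Real.log (f y)) x =
      (finrank ℝ E - 1) * (areaDensity f x ^ 3 * gradientCurvature f x +
        areaDensity f x * levelCurvature f x - 2 * areaDensity f x ^ 2) := by
  have finrank_sub_one_ne_zero : (finrank ℝ E - 1 : ℝ) ≠ 0 :=
    sub_ne_zero.mpr (Nat.cast_ne_one.mpr hdim)
  have areaDensity_ne_zero := (areaDensity_pos f x).ne'
  rw [normalizedPLaplacian, mul_div_assoc, ← radialHessian, hessianTrace_log hf hfx,
    radialHessian_log hf hfx, norm_gradient_sq, gradientCurvature, levelCurvature]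
  field_simp
  ring

end Curvature

section AMGM

variable {κ μ m s : ℝ}

lemma pos_and_pos_of_one_le_mul_of_add_nonneg (hm : 0 ≤ m) (hmul : 1 ≤ κ * μ)
    (hadd : 0 ≤ κ + m * μ) : 0 < κ ∧ 0 < μ := by
  rcases pos_and_pos_or_neg_and_neg_of_mul_pos (zero_lt_one.trans_le hmul) with hpos | ⟨hκ, hμ⟩
  · exact hpos
  · exact absurd hadd (add_neg_of_neg_of_nonpos hκ (mul_nonpos_of_nonneg_of_nonpos hm hμ.le)).not_ge

lemma two_mul_sq_le_of_one_le_mul (hs : 0 ≤ s) (hκ : 0 ≤ κ) (hμ : 0 ≤ μ) (hmul : 1 ≤ κ * μ) :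
    2 * s ^ 2 ≤ s ^ 3 * κ + s * μ := by
  have am_gm : 2 * s ≤ s ^ 2 * κ + μ := by
    refine le_of_sq_le_sq ?_ (by positivity)
    calc (2 * s) ^ 2 = 4 * s ^ 2 * 1 := by ring
      _ ≤ 4 * s ^ 2 * (κ * μ) := by gcongr
      _ = 4 * (s ^ 2 * κ) * μ := by ring
      _ ≤ (s ^ 2 * κ + μ) ^ 2 := four_mul_le_sq_add _ _
  calc 2 * s ^ 2 = s * (2 * s) := by ring
    _ ≤ s * (s ^ 2 * κ + μ) := mul_le_mul_of_nonneg_left am_gm hs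
    _ = s ^ 3 * κ + s * μ := by ring

end AMGM

end VerticalGraph

open VerticalGraph

theorem graph_nonneg_ricci_height_n_subharmonic_general [FiniteDimensional ℝ E]
    (hdim : 2 ≤ finrank ℝ E) (hf : ContDiffAt ℝ 2 f x) (hfpos : 0 < f x) (hgrad : ∇ f x ≠ 0)
    (hRic : 0 ≤ gradientRicci f x) (hMean : 0 ≤ meanCurvature f x) :
    0 ≤ normalizedPLaplacian (finrank ℝ E) (fun y => Real.log (f y)) x := by
  have hdim_ne_one : finrank ℝ E ≠ 1 := by lia
  have finrank_sub_one_pos : (0 : ℝ) < finrank ℝ E - 1 := sub_pos.mpr (by exact_mod_cast hdim)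
  have one_le_curvature_mul : 1 ≤ gradientCurvature f x * levelCurvature f x :=
    sub_nonneg.mp <| nonneg_of_mul_nonneg_right
      (hRic.trans (gradientRicci_le hdim_ne_one hgrad)) finrank_sub_one_pos
  obtain ⟨gradientCurvature_pos, levelCurvature_pos⟩ :=
    pos_and_pos_of_one_le_mul_of_add_nonneg finrank_sub_one_pos.le one_le_curvature_mul
      (meanCurvature_eq hdim_ne_one ▸ hMean)
  have am_gm := two_mul_sq_le_of_one_le_mul (areaDensity_pos f x).le gradientCurvature_pos.le
    levelCurvature_pos.le one_le_curvature_mul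
  refine nonneg_of_mul_nonneg_right ?_ (sq_pos_of_pos hfpos)
  rw [sq_mul_normalizedPLaplacian_log hdim_ne_one hf hfpos.ne']
  exact mul_nonneg finrank_sub_one_pos.le (sub_nonneg.mpr am_gm)

/-- Theorem 3.3: if the vertical graph of a positive `C²` function `f` has nonnegative
Ricci curvature in the direction of the normalized gradient (hypothesis (i), identity
(3.6) ≥ 0) and mean curvature at least `n` (hypothesis (ii)), then the height function
`h = log f` is pointwise Euclidean `n`-subharmonic wherever `∇f ≠ 0`:
`Δh + (n-2)|∇h|⁻² ⟨Hess h(∇h), ∇h⟩ ≥ 0`. -/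
theorem graph_nonneg_ricci_height_n_subharmonic (n : ℕ) (hn : 2 ≤ n)
    (U : Set (EuclideanSpace ℝ (Fin n))) (hU : IsOpen U)
    (f : EuclideanSpace ℝ (Fin n) → ℝ) (hfpos : ∀ x ∈ U, 0 < f x)
    (hf : ContDiffOn ℝ 2 f U)
    (hRic : ∀ x ∈ U, gradient f x ≠ 0 →
      -(n - 1 : ℝ) * ‖gradient f x‖ ^ 2 / (1 + ‖gradient f x‖ ^ 2) +
        (f x / (‖gradient f x‖ ^ 2 * (1 + ‖gradient f x‖ ^ 2) ^ 2)) *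
          ((n - 2 : ℝ) * ⟪fderiv ℝ (gradient f) x (gradient f x), gradient f x⟫ +
            (LinearMap.trace ℝ (EuclideanSpace ℝ (Fin n))
                (fderiv ℝ (gradient f) x :
                  EuclideanSpace ℝ (Fin n) →ₗ[ℝ] EuclideanSpace ℝ (Fin n))) *
              ‖gradient f x‖ ^ 2 * (1 + ‖gradient f x‖ ^ 2) +
            f x * ⟪fderiv ℝ (gradient f) x (gradient f x), gradient f x⟫ *
              (LinearMap.trace ℝ (EuclideanSpace ℝ (Fin n))
                (fderiv ℝ (gradient f) x :
                  EuclideanSpace ℝ (Fin n) →ₗ[ℝ] EuclideanSpace ℝ (Fin n))) -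
            ⟪fderiv ℝ (gradient f) x (gradient f x), gradient f x⟫ * ‖gradient f x‖ ^ 2 -
            f x * ‖fderiv ℝ (gradient f) x (gradient f x)‖ ^ 2) ≥ 0)
    (hMean : ∀ x ∈ U, gradient f x ≠ 0 →
      (1 / Real.sqrt (1 + ‖gradient f x‖ ^ 2)) *
        (n + f x * (LinearMap.trace ℝ (EuclideanSpace ℝ (Fin n))
              (fderiv ℝ (gradient f) x :
                EuclideanSpace ℝ (Fin n) →ₗ[ℝ] EuclideanSpace ℝ (Fin n))) -
          f x * ⟪fderiv ℝ (gradient f) x (gradient f x), gradient f x⟫ /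
            (1 + ‖gradient f x‖ ^ 2)) ≥ n) :
    ∀ x ∈ U, gradient f x ≠ 0 →
      (LinearMap.trace ℝ (EuclideanSpace ℝ (Fin n))
          (fderiv ℝ (gradient (fun y => Real.log (f y))) x :
            EuclideanSpace ℝ (Fin n) →ₗ[ℝ] EuclideanSpace ℝ (Fin n))) +
        (n - 2 : ℝ) *
          ⟪fderiv ℝ (gradient (fun y => Real.log (f y))) x
              (gradient (fun y => Real.log (f y)) x),
            gradient (fun y => Real.log (f y)) x⟫ /
          ‖gradient (fun y => Real.log (f y)) x‖ ^ 2 ≥ 0 := by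
  intro x hx hgrad
  simpa only [normalizedPLaplacian, hessianTrace, hessian, finrank_euclideanSpace_fin] using
    graph_nonneg_ricci_height_n_subharmonic_general
      (by simpa using hn) (hf.contDiffAt (hU.mem_nhds hx)) (hfpos x hx) hgrad
      (by simpa only [gradientRicci, hessianTrace, hessian, finrank_euclideanSpace_fin] using
        hRic x hx hgrad)
      (by simpa only [meanCurvature, hessianTrace, hessian, finrank_euclideanSpace_fin] using
        n.cast_nonneg.trans (hMean x hx hgrad))
end
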